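/- Let (η, ϕ) be a smooth solution of the three-dimensional water-wave system on [0,T]. Then 𝓑(T) = P − (1/2)∫₀ᵀ∭_{Ω(t)} |∇_{x,y}ϕ|² dy dx dt − 3∫₀ᵀ∬_Q η·∂ₜψ dx dt − 2g∫₀ᵀ∬_Q η² dx dt − [∬_Q η·(x·∇ψ) dx]ₜ₌₀^{t=T}, where P := (1/2)∫₀ᵀ [ L₁∫₀^{L₂}∫₋ₕ^{η(t,L₁,x₂)} |∇_{x,y}ϕ(t,L₁,x₂,y)|² dy dx₂ + L₂∫₀^{L₁}∫₋ₕ^{η(t,x₁,L₂)} |∇_{x,y}ϕ(t,x₁,L₂,y)|² dy dx₁ + h∬_Q |∇_{x,y}ϕ(t,x,−h)|² dx ] dt and [F(t)]ₜ₌₀^{t=T} denotes F(T) − F(0). -/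

import Mathlib

open Real Set MeasureTheory

noncomputable section

/-- `∂_{x₁}ϕ(t,x₁,x₂,y)` -/
def phiX1 (ϕ : ℝ → ℝ → ℝ → ℝ → ℝ) (t x₁ x₂ y : ℝ) : ℝ := deriv (fun s => ϕ t s x₂ y) x₁

/-- `∂_{x₂}ϕ(t,x₁,x₂,y)` -/
def phiX2 (ϕ : ℝ → ℝ → ℝ → ℝ → ℝ) (t x₁ x₂ y : ℝ) : ℝ := deriv (fun s => ϕ t x₁ s y) x₂

/-- `∂_yϕ(t,x₁,x₂,y)` -/
def phiY3 (ϕ : ℝ → ℝ → ℝ → ℝ → ℝ) (t x₁ x₂ y : ℝ) : ℝ := deriv (fun s => ϕ t x₁ x₂ s) y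

/-- `∂ₜϕ(t,x₁,x₂,y)` -/
def phiT3 (ϕ : ℝ → ℝ → ℝ → ℝ → ℝ) (t x₁ x₂ y : ℝ) : ℝ := deriv (fun s => ϕ s x₁ x₂ y) t

/-- `|∇_{x,y}ϕ|²(t,x₁,x₂,y)` -/
def gradSq3 (ϕ : ℝ → ℝ → ℝ → ℝ → ℝ) (t x₁ x₂ y : ℝ) : ℝ :=
  (phiX1 ϕ t x₁ x₂ y) ^ 2 + (phiX2 ϕ t x₁ x₂ y) ^ 2 + (phiY3 ϕ t x₁ x₂ y) ^ 2

/-- `|∇ₓϕ|²(t,x₁,x₂,y)` (horizontal gradient) -/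
def gradXSq3 (ϕ : ℝ → ℝ → ℝ → ℝ → ℝ) (t x₁ x₂ y : ℝ) : ℝ :=
  (phiX1 ϕ t x₁ x₂ y) ^ 2 + (phiX2 ϕ t x₁ x₂ y) ^ 2

/-- `∂_{x₁}η(t,x₁,x₂)` -/
def etaX1 (η : ℝ → ℝ → ℝ → ℝ) (t x₁ x₂ : ℝ) : ℝ := deriv (fun s => η t s x₂) x₁

/-- `∂_{x₂}η(t,x₁,x₂)` -/
def etaX2 (η : ℝ → ℝ → ℝ → ℝ) (t x₁ x₂ : ℝ) : ℝ := deriv (fun s => η t x₁ s) x₂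

/-- `∂ₜη(t,x₁,x₂)` -/
def etaT3 (η : ℝ → ℝ → ℝ → ℝ) (t x₁ x₂ : ℝ) : ℝ := deriv (fun s => η s x₁ x₂) t

/-- the trace `ψ(t,x) = ϕ(t,x,η(t,x))` -/
def psi3 (η : ℝ → ℝ → ℝ → ℝ) (ϕ : ℝ → ℝ → ℝ → ℝ → ℝ) (t x₁ x₂ : ℝ) : ℝ :=
  ϕ t x₁ x₂ (η t x₁ x₂)

/-- `∂ₜψ(t,x₁,x₂)` -/
def psi3T (η : ℝ → ℝ → ℝ → ℝ) (ϕ : ℝ → ℝ → ℝ → ℝ → ℝ) (t x₁ x₂ : ℝ) : ℝ :=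
  deriv (fun s => psi3 η ϕ s x₁ x₂) t

/-- `∂_{x₁}ψ(t,x₁,x₂)` -/
def psi3X1 (η : ℝ → ℝ → ℝ → ℝ) (ϕ : ℝ → ℝ → ℝ → ℝ → ℝ) (t x₁ x₂ : ℝ) : ℝ :=
  deriv (fun s => psi3 η ϕ t s x₂) x₁

/-- `∂_{x₂}ψ(t,x₁,x₂)` -/
def psi3X2 (η : ℝ → ℝ → ℝ → ℝ) (ϕ : ℝ → ℝ → ℝ → ℝ → ℝ) (t x₁ x₂ : ℝ) : ℝ :=
  deriv (fun s => psi3 η ϕ t x₁ s) x₂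

/-- `Θ(t,x) = -η ∂ₜψ - (g/2) η²` -/
def Theta3 (g : ℝ) (η : ℝ → ℝ → ℝ → ℝ) (ϕ : ℝ → ℝ → ℝ → ℝ → ℝ) (t x₁ x₂ : ℝ) : ℝ :=
  -(η t x₁ x₂) * psi3T η ϕ t x₁ x₂ - g / 2 * (η t x₁ x₂) ^ 2

/-- the energy `𝓗(t)` -/
def energy3D (L₁ L₂ h g : ℝ) (η : ℝ → ℝ → ℝ → ℝ) (ϕ : ℝ → ℝ → ℝ → ℝ → ℝ) (t : ℝ) : ℝ :=
  g / 2 * (∫ x₁ in (0:ℝ)..L₁, ∫ x₂ in (0:ℝ)..L₂, (η t x₁ x₂) ^ 2)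
    + 1 / 2 * ∫ x₁ in (0:ℝ)..L₁, ∫ x₂ in (0:ℝ)..L₂, ∫ y in (-h)..(η t x₁ x₂),
        gradSq3 ϕ t x₁ x₂ y

/-- the boundary observation `𝓑(T)` -/
def bigB (L₁ L₂ g T : ℝ) (η : ℝ → ℝ → ℝ → ℝ) (ϕ : ℝ → ℝ → ℝ → ℝ → ℝ) : ℝ :=
  ∫ t in (0:ℝ)..T,
    (L₁ * (∫ x₂ in (0:ℝ)..L₂, Theta3 g η ϕ t L₁ x₂)
      + L₂ * ∫ x₁ in (0:ℝ)..L₁, Theta3 g η ϕ t x₁ L₂)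

/-- the positive boundary term `P` -/
def bigP (L₁ L₂ h T : ℝ) (η : ℝ → ℝ → ℝ → ℝ) (ϕ : ℝ → ℝ → ℝ → ℝ → ℝ) : ℝ :=
  1 / 2 * ∫ t in (0:ℝ)..T,
    (L₁ * (∫ x₂ in (0:ℝ)..L₂, ∫ y in (-h)..(η t L₁ x₂), gradSq3 ϕ t L₁ x₂ y)
      + L₂ * (∫ x₁ in (0:ℝ)..L₁, ∫ y in (-h)..(η t x₁ L₂), gradSq3 ϕ t x₁ L₂ y)
      + h * ∫ x₁ in (0:ℝ)..L₁, ∫ x₂ in (0:ℝ)..L₂, gradSq3 ϕ t x₁ x₂ (-h))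

/-- A smooth solution of the three-dimensional water-wave system on `[0,T]`,
in the tank over `Q = [0,L₁] × [0,L₂]`. -/
structure IsWW3D (L₁ L₂ h g T : ℝ) (η : ℝ → ℝ → ℝ → ℝ)
    (ϕ : ℝ → ℝ → ℝ → ℝ → ℝ) : Prop where
  smooth_eta : ContDiff ℝ (⊤ : ℕ∞) (fun p : ℝ × ℝ × ℝ => η p.1 p.2.1 p.2.2)
  smooth_phi : ContDiff ℝ (⊤ : ℕ∞) (fun p : ℝ × ℝ × ℝ × ℝ => ϕ p.1 p.2.1 p.2.2.1 p.2.2.2)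
  eta_lower : ∀ t ∈ Icc (0:ℝ) T, ∀ x₁ ∈ Icc (0:ℝ) L₁, ∀ x₂ ∈ Icc (0:ℝ) L₂,
    -h / 2 ≤ η t x₁ x₂
  eta_mean : ∀ t ∈ Icc (0:ℝ) T,
    (∫ x₁ in (0:ℝ)..L₁, ∫ x₂ in (0:ℝ)..L₂, η t x₁ x₂) = 0
  laplace : ∀ t ∈ Icc (0:ℝ) T, ∀ x₁ ∈ Icc (0:ℝ) L₁, ∀ x₂ ∈ Icc (0:ℝ) L₂,
    ∀ y ∈ Icc (-h) (η t x₁ x₂),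
      deriv (fun s => phiX1 ϕ t s x₂ y) x₁ + deriv (fun s => phiX2 ϕ t x₁ s y) x₂
        + deriv (fun s => phiY3 ϕ t x₁ x₂ s) y = 0
  bc_x1 : ∀ t ∈ Icc (0:ℝ) T, ∀ x₁ ∈ ({0, L₁} : Set ℝ), ∀ x₂ ∈ Icc (0:ℝ) L₂,
    ∀ y ∈ Icc (-h) (η t x₁ x₂), phiX1 ϕ t x₁ x₂ y = 0
  bc_x2 : ∀ t ∈ Icc (0:ℝ) T, ∀ x₂ ∈ ({0, L₂} : Set ℝ), ∀ x₁ ∈ Icc (0:ℝ) L₁,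
    ∀ y ∈ Icc (-h) (η t x₁ x₂), phiX2 ϕ t x₁ x₂ y = 0
  bc_bottom : ∀ t ∈ Icc (0:ℝ) T, ∀ x₁ ∈ Icc (0:ℝ) L₁, ∀ x₂ ∈ Icc (0:ℝ) L₂,
    phiY3 ϕ t x₁ x₂ (-h) = 0
  kinematic : ∀ t ∈ Icc (0:ℝ) T, ∀ x₁ ∈ Icc (0:ℝ) L₁, ∀ x₂ ∈ Icc (0:ℝ) L₂,
    etaT3 η t x₁ x₂
      = phiY3 ϕ t x₁ x₂ (η t x₁ x₂)
        - (etaX1 η t x₁ x₂ * phiX1 ϕ t x₁ x₂ (η t x₁ x₂)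
            + etaX2 η t x₁ x₂ * phiX2 ϕ t x₁ x₂ (η t x₁ x₂))
  bernoulli : ∀ t ∈ Icc (0:ℝ) T, ∀ x₁ ∈ Icc (0:ℝ) L₁, ∀ x₂ ∈ Icc (0:ℝ) L₂,
    phiT3 ϕ t x₁ x₂ (η t x₁ x₂)
      + 1 / 2 * ((phiX1 ϕ t x₁ x₂ (η t x₁ x₂)) ^ 2
          + (phiX2 ϕ t x₁ x₂ (η t x₁ x₂)) ^ 2 + (phiY3 ϕ t x₁ x₂ (η t x₁ x₂)) ^ 2)
      + g * η t x₁ x₂ = 0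
  etaX1_bc : ∀ t ∈ Icc (0:ℝ) T, ∀ x₁ ∈ ({0, L₁} : Set ℝ), ∀ x₂ ∈ Icc (0:ℝ) L₂,
    etaX1 η t x₁ x₂ = 0
  etaX2_bc : ∀ t ∈ Icc (0:ℝ) T, ∀ x₂ ∈ ({0, L₂} : Set ℝ), ∀ x₁ ∈ Icc (0:ℝ) L₁,
    etaX2 η t x₁ x₂ = 0

/-! At a fixed time the divergence theorem is applied to the Rellich field
`(X·∇ϕ)∇ϕ - ½|∇ϕ|²X`, `X = (x, y)`, whose divergence is `(X·∇ϕ)Δϕ - ½|∇ϕ|²` in dimension three.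
For harmonic `ϕ` with Neumann conditions, the walls through the origin contribute nothing, the
opposite walls and the bottom give the integrand of `P`, and on the free surface the equations of
motion turn the flux into `K = ∂ₜη (x·∇ψ) + (∂ₜψ + gη)(η - x·∇η)`.

On the other hand `div (xΘ) = 2Θ + x·∇Θ` equals `K - 3η∂ₜψ - 2gη² - ∂ₜ(η (x·∇ψ))`. Integrating it
over `Q` gives the wall integrals of `Θ`, and integrating in time turns the last term into the
boundary values of the virial moment `∬ η (x·∇ψ)`. -/

open Function intervalIntegral

section PartialDerivatives

variable {E F : Type*} [NormedAddCommGroup E] [NormedSpace ℝ E]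
  [NormedAddCommGroup F] [NormedSpace ℝ F]

theorem contDiff_deriv_uncurry {m n : WithTop ℕ∞} {f : E → ℝ → F} {g : E → ℝ}
    (hf : ContDiff ℝ n ↿f) (hg : ContDiff ℝ m g) (hmn : m + 1 ≤ n) :
    ContDiff ℝ m fun x => deriv (f x) (g x) := by
  simp only [← fderiv_apply_one_eq_deriv]
  exact (ContDiff.fderiv hf hg hmn).clm_apply contDiff_const

-- `fun_prop` cannot discharge the side goal `m + 1 ≤ n` of the general lemma.
@[fun_prop]
theorem contDiff_one_deriv_uncurry {f : E → ℝ → F} {g : E → ℝ}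
    (hf : ContDiff ℝ 2 ↿f) (hg : ContDiff ℝ 1 g) :
    ContDiff ℝ 1 fun x => deriv (f x) (g x) :=
  contDiff_deriv_uncurry hf hg (by norm_num)

@[fun_prop]
theorem continuous_deriv_uncurry {f : E → ℝ → F} {g : E → ℝ}
    (hf : ContDiff ℝ 1 ↿f) (hg : Continuous g) :
    Continuous fun x => deriv (f x) (g x) := by
  have hderiv : ContDiff ℝ 0 fun q : E × ℝ => deriv (f q.1) q.2 :=
    contDiff_deriv_uncurry (f := fun q : E × ℝ => f q.1) (by fun_prop) contDiff_snd (by norm_num)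
  exact hderiv.continuous.comp (continuous_id.prodMk hg)

theorem hasDerivAt_left_of_uncurry {f : ℝ → ℝ → F} {x y : ℝ}
    (hf : DifferentiableAt ℝ ↿f (x, y)) :
    HasDerivAt (fun s => f s y) (fderiv ℝ ↿f (x, y) (1, 0)) x :=
  hf.hasFDerivAt.comp_hasDerivAt (f := fun s => (s, y)) x
    ((hasDerivAt_id x).prodMk (hasDerivAt_const x y))

theorem hasDerivAt_right_of_uncurry {f : ℝ → ℝ → F} {x y : ℝ}
    (hf : DifferentiableAt ℝ ↿f (x, y)) :
    HasDerivAt (f x) (fderiv ℝ ↿f (x, y) (0, 1)) y :=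
  hf.hasFDerivAt.comp_hasDerivAt (f := fun s => (x, s)) y
    ((hasDerivAt_const y x).prodMk (hasDerivAt_id y))

theorem hasDerivAt_comp_graph {f : ℝ → ℝ → F} {u : ℝ → ℝ} {u' x : ℝ}
    (hf : DifferentiableAt ℝ ↿f (x, u x)) (hu : HasDerivAt u u' x) :
    HasDerivAt (fun s => f s (u s))
      (deriv (fun s => f s (u x)) x + u' • deriv (f x) (u x)) x := by
  refine (hf.hasFDerivAt.comp_hasDerivAt (f := fun s => (s, u s)) x
    ((hasDerivAt_id x).prodMk hu)).congr_deriv ?_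
  rw [(hasDerivAt_left_of_uncurry hf).deriv, (hasDerivAt_right_of_uncurry hf).deriv,
    ← map_smul, ← map_add]
  simp

theorem deriv_deriv_comm {f : ℝ → ℝ → F} (hf : ContDiff ℝ 2 ↿f) (x y : ℝ) :
    deriv (fun s => deriv (f s) y) x = deriv (fun r => deriv (fun s => f s r) x) y := by
  have hdf : Differentiable ℝ ↿f := hf.differentiable (by norm_num)
  have hd : Differentiable ℝ (fderiv ℝ ↿f) :=
    (hf.fderiv_right (m := 1) (by norm_num)).differentiable (by norm_num)
  have hsymm : IsSymmSndFDerivAt ℝ ↿f (x, y) := hf.contDiffAt.isSymmSndFDerivAt (by simp)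
  have hleft : HasDerivAt (fun s => deriv (f s) y)
      (fderiv ℝ (fderiv ℝ ↿f) (x, y) (1, 0) (0, 1)) x := by
    simp only [fun s => (hasDerivAt_right_of_uncurry (hdf (s, y))).deriv]
    exact ((hasDerivAt_left_of_uncurry (f := curry (fderiv ℝ ↿f)) (hd (x, y))).clm_apply
      (hasDerivAt_const x ((0 : ℝ), (1 : ℝ)))).congr_deriv (by simp only [map_zero, add_zero]; rfl)
  have hright : HasDerivAt (fun r => deriv (fun s => f s r) x)
      (fderiv ℝ (fderiv ℝ ↿f) (x, y) (0, 1) (1, 0)) y := by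
    simp only [fun r => (hasDerivAt_left_of_uncurry (hdf (x, r))).deriv]
    exact ((hasDerivAt_right_of_uncurry (f := curry (fderiv ℝ ↿f)) (hd (x, y))).clm_apply
      (hasDerivAt_const y ((1 : ℝ), (0 : ℝ)))).congr_deriv (by simp only [map_zero, add_zero]; rfl)
  rw [hleft.deriv, hright.deriv, hsymm]

end PartialDerivatives

section IteratedIntegrals

variable {E : Type*} [NormedAddCommGroup E] [NormedSpace ℝ E]

theorem integral_integral_swap_of_continuous {f : ℝ → ℝ → E} (hf : Continuous ↿f)
    (a b c d : ℝ) : ∫ x in a..b, ∫ y in c..d, f x y = ∫ y in c..d, ∫ x in a..b, f x y :=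
  intervalIntegral_intervalIntegral_swap <|
    (hf.continuousOn.integrableOn_compact (isCompact_uIcc.prod isCompact_uIcc)).mono_set
      (prod_mono uIoc_subset_uIcc uIoc_subset_uIcc)

theorem integral_add_of_continuous {f g : ℝ → E} (hf : Continuous f) (hg : Continuous g)
    (a b : ℝ) : ∫ x in a..b, (f x + g x) = (∫ x in a..b, f x) + ∫ x in a..b, g x :=
  integral_add (hf.intervalIntegrable a b) (hg.intervalIntegrable a b)

theorem integral_sub_of_continuous {f g : ℝ → E} (hf : Continuous f) (hg : Continuous g)
    (a b : ℝ) : ∫ x in a..b, (f x - g x) = (∫ x in a..b, f x) - ∫ x in a..b, g x :=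
  integral_sub (hf.intervalIntegrable a b) (hg.intervalIntegrable a b)

theorem integral_integral_add_of_continuous {f g : ℝ → ℝ → E} (hf : Continuous ↿f)
    (hg : Continuous ↿g) (a b c d : ℝ) :
    ∫ x in a..b, ∫ y in c..d, (f x y + g x y)
      = (∫ x in a..b, ∫ y in c..d, f x y) + ∫ x in a..b, ∫ y in c..d, g x y := by
  rw [← integral_add_of_continuous (by fun_prop) (by fun_prop)]
  congr! 2 with x
  exact integral_add_of_continuous (by fun_prop) (by fun_prop) c d

theorem integral_integral_sub_of_continuous {f g : ℝ → ℝ → E} (hf : Continuous ↿f)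
    (hg : Continuous ↿g) (a b c d : ℝ) :
    ∫ x in a..b, ∫ y in c..d, (f x y - g x y)
      = (∫ x in a..b, ∫ y in c..d, f x y) - ∫ x in a..b, ∫ y in c..d, g x y := by
  rw [← integral_sub_of_continuous (by fun_prop) (by fun_prop)]
  congr! 2 with x
  exact integral_sub_of_continuous (by fun_prop) (by fun_prop) c d

theorem integral_congr_Icc {f g : ℝ → E} {a b : ℝ} (hab : a ≤ b)
    (h : ∀ x ∈ Icc a b, f x = g x) : ∫ x in a..b, f x = ∫ x in a..b, g x :=
  integral_congr fun x hx => h x (by rwa [uIcc_of_le hab] at hx)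

theorem integral_integral_below_graph_eq_const_mul {f g : ℝ → ℝ → ℝ} {u : ℝ → ℝ} {a b c k : ℝ}
    (hab : a ≤ b) (hu : ∀ x ∈ Icc a b, c ≤ u x)
    (h : ∀ x ∈ Icc a b, ∀ y ∈ Icc c (u x), f x y = k * g x y) :
    ∫ x in a..b, ∫ y in c..u x, f x y = k * ∫ x in a..b, ∫ y in c..u x, g x y := by
  simp only [← intervalIntegral.integral_const_mul]
  exact integral_congr_Icc hab fun x hx => integral_congr_Icc (hu x hx) (h x hx)

variable [CompleteSpace E]

theorem hasDerivAt_integral_of_contDiff {f : ℝ → ℝ → E} (hf : ContDiff ℝ 1 ↿f) (a b x : ℝ) :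
    HasDerivAt (fun s => ∫ y in a..b, f s y) (∫ y in a..b, deriv (fun s => f s y) x) x := by
  -- Interchanging the integrals exhibits the parametric integral as a primitive.
  have hprim (s : ℝ) : ∫ y in a..b, f s y
      = (∫ y in a..b, f x y) + ∫ r in x..s, ∫ y in a..b, deriv (fun s => f s y) r := by
    rw [integral_integral_swap_of_continuous (by fun_prop),
      ← integral_add_of_continuous (by fun_prop) (by fun_prop)]
    congr! 2 with y
    have hd : Differentiable ℝ fun s => f s y := by fun_prop (disch := norm_num)
    rw [integral_deriv_eq_sub (fun r _ => hd r)
      (Continuous.intervalIntegrable (by fun_prop) _ _), add_sub_cancel]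
  have hcont : Continuous fun r => ∫ y in a..b, deriv (fun s => f s y) r := by fun_prop
  rw [funext hprim]
  exact (hcont.integral_hasStrictDerivAt x x).hasDerivAt.const_add _

theorem hasDerivAt_integral_graph {f : ℝ → ℝ → E} (hf : ContDiff ℝ 1 ↿f) (c : ℝ)
    {u : ℝ → ℝ} {u' x : ℝ} (hu : HasDerivAt u u' x) :
    HasDerivAt (fun s => ∫ y in c..u s, f s y)
      ((∫ y in c..u x, deriv (fun s => f s y) x) + u' • f x (u x)) x := by
  have hleft (s z : ℝ) := (hasDerivAt_integral_of_contDiff hf c z s)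
  have hright (s z : ℝ) : HasDerivAt (fun z => ∫ y in c..z, f s y) (f s z) z :=
    (Continuous.integral_hasStrictDerivAt (by fun_prop) c z).hasDerivAt
  have hF : DifferentiableAt ℝ ↿(fun s z => ∫ y in c..z, f s y) (x, u x) :=
    (hasStrictFDerivAt_uncurry_coprod (𝕜 := ℝ)
      (f₁ := fun s z => ContinuousLinearMap.toSpanSingletonCLE
        (∫ y in c..z, deriv (fun s => f s y) s))
      (f₂ := fun s z => ContinuousLinearMap.toSpanSingletonCLE (f s z))
      (.of_forall fun p => (hleft p.1 p.2).hasFDerivAt)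
      (.of_forall fun p => (hright p.1 p.2).hasFDerivAt)
      (ContinuousLinearMap.toSpanSingletonCLE.continuous.comp (by fun_prop)).continuousAt
      (ContinuousLinearMap.toSpanSingletonCLE.continuous.comp (by fun_prop)).continuousAt
      ).hasFDerivAt.differentiableAt
  simpa only [(hleft x (u x)).deriv, (hright x (u x)).deriv] using hasDerivAt_comp_graph hF hu

theorem integral_integral_deriv_below_graph {f : ℝ → ℝ → E} {u : ℝ → ℝ}
    (hf : ContDiff ℝ 1 ↿f) (hu : ContDiff ℝ 1 u) (a b c : ℝ) :
    ∫ x in a..b, ∫ y in c..u x, deriv (fun s => f s y) x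
      = (∫ y in c..u b, f b y) - (∫ y in c..u a, f a y) - ∫ x in a..b, deriv u x • f x (u x) := by
  have hd : Differentiable ℝ u := hu.differentiable (by norm_num)
  rw [eq_sub_iff_add_eq, ← integral_add_of_continuous (by fun_prop) (by fun_prop)]
  exact integral_eq_sub_of_hasDerivAt
    (fun x _ => hasDerivAt_integral_graph hf c (hd x).hasDerivAt)
    (Continuous.intervalIntegrable (by fun_prop) _ _)

end IteratedIntegrals

section DivergenceTheorem

variable {V V₁ V₂ V₃ : ℝ → ℝ → ℝ → ℝ} {e : ℝ → ℝ → ℝ}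

theorem integral_deriv_snd_below_surface (hV : ContDiff ℝ 1 ↿V) (he : ContDiff ℝ 1 ↿e)
    (a₁ a₂ b₁ b₂ c : ℝ) :
    ∫ a in a₁..a₂, ∫ b in b₁..b₂, ∫ y in c..e a b, deriv (fun s => V a s y) b
      = (∫ a in a₁..a₂, ∫ y in c..e a b₂, V a b₂ y) - (∫ a in a₁..a₂, ∫ y in c..e a b₁, V a b₁ y)
        - ∫ a in a₁..a₂, ∫ b in b₁..b₂, deriv (e a) b * V a b (e a b) := by
  have hslice (a : ℝ) := integral_integral_deriv_below_graph (f := V a) (u := e a)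
    (by fun_prop) (by fun_prop) b₁ b₂ c
  simp only [hslice, smul_eq_mul]
  repeat rw [integral_sub_of_continuous (by fun_prop) (by fun_prop)]

theorem integral_deriv_fst_below_surface (hV : ContDiff ℝ 1 ↿V) (he : ContDiff ℝ 1 ↿e)
    (a₁ a₂ b₁ b₂ c : ℝ) :
    ∫ a in a₁..a₂, ∫ b in b₁..b₂, ∫ y in c..e a b, deriv (fun s => V s b y) a
      = (∫ b in b₁..b₂, ∫ y in c..e a₂ b, V a₂ b y) - (∫ b in b₁..b₂, ∫ y in c..e a₁ b, V a₁ b y)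
        - ∫ a in a₁..a₂, ∫ b in b₁..b₂, deriv (fun s => e s b) a * V a b (e a b) := by
  rw [integral_integral_swap_of_continuous (by fun_prop), integral_integral_swap_of_continuous
    (f := fun a b => deriv (fun s => e s b) a * V a b (e a b)) (by fun_prop)]
  exact integral_deriv_snd_below_surface (V := fun b a => V a b) (e := fun b a => e a b)
    (by fun_prop) (by fun_prop) b₁ b₂ a₁ a₂ c

theorem integral_deriv_vertical_below_surface (hV : ContDiff ℝ 1 ↿V) (he : Continuous ↿e)
    (a₁ a₂ b₁ b₂ c : ℝ) :
    ∫ a in a₁..a₂, ∫ b in b₁..b₂, ∫ y in c..e a b, deriv (V a b) y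
      = (∫ a in a₁..a₂, ∫ b in b₁..b₂, V a b (e a b)) - ∫ a in a₁..a₂, ∫ b in b₁..b₂, V a b c := by
  rw [← integral_integral_sub_of_continuous (by fun_prop) (by fun_prop)]
  congr! 4 with a b
  have hd : Differentiable ℝ (V a b) := by fun_prop (disch := norm_num)
  exact integral_deriv_eq_sub (fun y _ => hd y) (Continuous.intervalIntegrable (by fun_prop) _ _)

theorem integral_divergence_below_surface (hV₁ : ContDiff ℝ 1 ↿V₁) (hV₂ : ContDiff ℝ 1 ↿V₂)
    (hV₃ : ContDiff ℝ 1 ↿V₃) (he : ContDiff ℝ 1 ↿e) (a₁ a₂ b₁ b₂ c : ℝ) :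
    ∫ a in a₁..a₂, ∫ b in b₁..b₂, ∫ y in c..e a b,
        (deriv (fun s => V₁ s b y) a + deriv (fun s => V₂ a s y) b + deriv (V₃ a b) y)
      = ((∫ b in b₁..b₂, ∫ y in c..e a₂ b, V₁ a₂ b y)
          - ∫ b in b₁..b₂, ∫ y in c..e a₁ b, V₁ a₁ b y)
        + ((∫ a in a₁..a₂, ∫ y in c..e a b₂, V₂ a b₂ y)
          - ∫ a in a₁..a₂, ∫ y in c..e a b₁, V₂ a b₁ y)
        + ((∫ a in a₁..a₂, ∫ b in b₁..b₂, (V₃ a b (e a b)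
              - deriv (fun s => e s b) a * V₁ a b (e a b) - deriv (e a) b * V₂ a b (e a b)))
          - ∫ a in a₁..a₂, ∫ b in b₁..b₂, V₃ a b c) := by
  have hsplit (a b : ℝ) : ∫ y in c..e a b,
        (deriv (fun s => V₁ s b y) a + deriv (fun s => V₂ a s y) b + deriv (V₃ a b) y)
      = (∫ y in c..e a b, deriv (fun s => V₁ s b y) a)
        + (∫ y in c..e a b, deriv (fun s => V₂ a s y) b) + ∫ y in c..e a b, deriv (V₃ a b) y := by
    rw [integral_add_of_continuous (by fun_prop) (by fun_prop),
      integral_add_of_continuous (by fun_prop) (by fun_prop)]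
  simp only [hsplit]
  repeat rw [integral_integral_add_of_continuous (by fun_prop) (by fun_prop)]
  repeat rw [integral_integral_sub_of_continuous (by fun_prop) (by fun_prop)]
  rw [integral_deriv_fst_below_surface hV₁ he, integral_deriv_snd_below_surface hV₂ he,
    integral_deriv_vertical_below_surface hV₃ he.continuous]
  ring

theorem integral_deriv_integral_integral {W : ℝ → ℝ → ℝ → ℝ} (hW : ContDiff ℝ 1 ↿W)
    (t₁ t₂ a₁ a₂ b₁ b₂ : ℝ) :
    ∫ t in t₁..t₂, ∫ a in a₁..a₂, ∫ b in b₁..b₂, deriv (fun s => W s a b) t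
      = (∫ a in a₁..a₂, ∫ b in b₁..b₂, W t₂ a b) - ∫ a in a₁..a₂, ∫ b in b₁..b₂, W t₁ a b := by
  rw [integral_integral_swap_of_continuous (by fun_prop)]
  simp only [fun a => integral_integral_swap_of_continuous
    (f := fun t b => deriv (fun s => W s a b) t) (by fun_prop)]
  exact integral_deriv_vertical_below_surface (V := fun a b t => W t a b) (e := fun _ _ => t₂)
    (by fun_prop) (by fun_prop) a₁ a₂ b₁ b₂ t₁

theorem integral_wall_eq_integral_divergence {F : ℝ → ℝ → ℝ} (hF : ContDiff ℝ 1 ↿F)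
    (L₁ L₂ : ℝ) :
    L₁ * (∫ b in 0..L₂, F L₁ b) + L₂ * (∫ a in 0..L₁, F a L₂)
      = ∫ a in 0..L₁, ∫ b in 0..L₂,
          (2 * F a b + a * deriv (fun s => F s b) a + b * deriv (F a) b) := by
  have hradial {G : ℝ → ℝ} (hG : ContDiff ℝ 1 G) (L : ℝ) :
      ∫ x in 0..L, (G x + x * deriv G x) = L * G L := by
    have hderiv (x : ℝ) : HasDerivAt (fun x => x * G x) (G x + x * deriv G x) x := by
      simpa only [one_mul] using
        (hasDerivAt_id' x).fun_mul (hG.differentiable one_ne_zero x).hasDerivAt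
    rw [integral_eq_sub_of_hasDerivAt (fun x _ => hderiv x)
      (Continuous.intervalIntegrable (by fun_prop) _ _), zero_mul, sub_zero]
  have hsplit : ∫ a in 0..L₁, ∫ b in 0..L₂,
        (2 * F a b + a * deriv (fun s => F s b) a + b * deriv (F a) b)
      = (∫ a in 0..L₁, ∫ b in 0..L₂, (F a b + a * deriv (fun s => F s b) a))
        + ∫ a in 0..L₁, ∫ b in 0..L₂, (F a b + b * deriv (F a) b) := by
    rw [← integral_integral_add_of_continuous (by fun_prop) (by fun_prop)]
    congr! 4 with a b
    ring
  rw [hsplit, integral_integral_swap_of_continuous (by fun_prop)]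
  have hfst (b : ℝ) := hradial (G := fun s => F s b) (by fun_prop) L₁
  have hsnd (a : ℝ) := hradial (G := F a) (by fun_prop) L₂
  simp only [hfst, hsnd, intervalIntegral.integral_const_mul]

end DivergenceTheorem

section Rellich

/-- The component along `x` of the Rellich field `(X·∇f)∇f - ½|∇f|²X` at a point with coordinates
`x, b, c`, where `u, v, w` are the partial derivatives of `f` with respect to these coordinates. -/
def rellichFlux (x u b v c w : ℝ) : ℝ :=
  (x * u + b * v + c * w) * u - x / 2 * (u ^ 2 + v ^ 2 + w ^ 2)

theorem rellichFlux_zero (x b v c w : ℝ) :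
    rellichFlux x 0 b v c w = -x / 2 * (0 ^ 2 + v ^ 2 + w ^ 2) := by
  rw [rellichFlux]
  ring

theorem hasDerivAt_rellichFlux {u v w : ℝ → ℝ} {u' v' w' x : ℝ} (hu : HasDerivAt u u' x)
    (hv : HasDerivAt v v' x) (hw : HasDerivAt w w' x) (b c : ℝ) :
    HasDerivAt (fun s => rellichFlux s (u s) b (v s) c (w s))
      ((x * u x + b * v x + c * w x) * u' + u x ^ 2 - (u x ^ 2 + v x ^ 2 + w x ^ 2) / 2
        + (b * v' + c * w') * u x - x * (v x * v' + w x * w')) x := by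
  have hid := hasDerivAt_id' x
  refine (((((hid.mul hu).add (hv.const_mul b)).add (hw.const_mul c)).mul hu).sub
    ((hid.div_const 2).mul (((hu.pow 2).add (hv.pow 2)).add (hw.pow 2)))).congr_deriv ?_
  simp only [Pi.add_apply, Pi.mul_apply, Pi.pow_apply]
  ring

variable {ϕ : ℝ → ℝ → ℝ → ℝ → ℝ} {η : ℝ → ℝ → ℝ → ℝ} {L₁ L₂ h t : ℝ}

theorem divergence_rellichFlux (hϕ : ContDiff ℝ 2 ↿(ϕ t)) (a b y : ℝ) :
    deriv (fun s => rellichFlux s (phiX1 ϕ t s b y) b (phiX2 ϕ t s b y) y (phiY3 ϕ t s b y)) a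
      + deriv (fun s => rellichFlux s (phiX2 ϕ t a s y) a (phiX1 ϕ t a s y) y (phiY3 ϕ t a s y)) b
      + deriv (fun s => rellichFlux s (phiY3 ϕ t a b s) a (phiX1 ϕ t a b s) b (phiX2 ϕ t a b s)) y
    = (a * phiX1 ϕ t a b y + b * phiX2 ϕ t a b y + y * phiY3 ϕ t a b y)
        * (deriv (fun s => phiX1 ϕ t s b y) a + deriv (fun s => phiX2 ϕ t a s y) b
          + deriv (fun s => phiY3 ϕ t a b s) y)
      - 1 / 2 * gradSq3 ϕ t a b y := by
  have hd₁ : Differentiable ℝ ↿(phiX1 ϕ t) :=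
    ContDiff.differentiable (n := 1) (by fun_prop [phiX1]) (by norm_num)
  have hd₂ : Differentiable ℝ ↿(phiX2 ϕ t) :=
    ContDiff.differentiable (n := 1) (by fun_prop [phiX2]) (by norm_num)
  have hd₃ : Differentiable ℝ ↿(phiY3 ϕ t) :=
    ContDiff.differentiable (n := 1) (by fun_prop [phiY3]) (by norm_num)
  have hsymm₁₂ : deriv (fun s => phiX2 ϕ t s b y) a = deriv (fun s => phiX1 ϕ t a s y) b :=
    deriv_deriv_comm (f := fun a b => ϕ t a b y) (by fun_prop) a b
  have hsymm₁₃ : deriv (fun s => phiY3 ϕ t s b y) a = deriv (fun s => phiX1 ϕ t a b s) y :=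
    deriv_deriv_comm (f := fun a y => ϕ t a b y) (by fun_prop) a y
  have hsymm₂₃ : deriv (fun s => phiY3 ϕ t a s y) b = deriv (fun s => phiX2 ϕ t a b s) y :=
    deriv_deriv_comm (f := fun b y => ϕ t a b y) (by fun_prop) b y
  have hdiff_a {F : ℝ → ℝ → ℝ → ℝ} (hF : Differentiable ℝ ↿F) :
      Differentiable ℝ fun s => F s b y := by fun_prop
  have hdiff_b {F : ℝ → ℝ → ℝ → ℝ} (hF : Differentiable ℝ ↿F) :
      Differentiable ℝ fun s => F a s y := by fun_prop
  have hdiff_y {F : ℝ → ℝ → ℝ → ℝ} (hF : Differentiable ℝ ↿F) :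
      Differentiable ℝ (F a b) := by fun_prop
  rw [(hasDerivAt_rellichFlux (hdiff_a hd₁ a).hasDerivAt (hdiff_a hd₂ a).hasDerivAt
      (hdiff_a hd₃ a).hasDerivAt b y).deriv,
    (hasDerivAt_rellichFlux (hdiff_b hd₂ b).hasDerivAt (hdiff_b hd₁ b).hasDerivAt
      (hdiff_b hd₃ b).hasDerivAt a y).deriv,
    (hasDerivAt_rellichFlux (hdiff_y hd₃ y).hasDerivAt (hdiff_y hd₁ y).hasDerivAt
      (hdiff_y hd₂ y).hasDerivAt a b).deriv,
    hsymm₁₂, hsymm₁₃, hsymm₂₃, gradSq3]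
  ring

theorem rellich_identity (hϕ : ContDiff ℝ 2 ↿(ϕ t)) (hη : ContDiff ℝ 1 ↿(η t))
    (a₁ a₂ b₁ b₂ c : ℝ) :
    ∫ a in a₁..a₂, ∫ b in b₁..b₂, ∫ y in c..η t a b,
        ((a * phiX1 ϕ t a b y + b * phiX2 ϕ t a b y + y * phiY3 ϕ t a b y)
            * (deriv (fun s => phiX1 ϕ t s b y) a + deriv (fun s => phiX2 ϕ t a s y) b
              + deriv (fun s => phiY3 ϕ t a b s) y)
          - 1 / 2 * gradSq3 ϕ t a b y)
      = ((∫ b in b₁..b₂, ∫ y in c..η t a₂ b,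
              rellichFlux a₂ (phiX1 ϕ t a₂ b y) b (phiX2 ϕ t a₂ b y) y (phiY3 ϕ t a₂ b y))
          - ∫ b in b₁..b₂, ∫ y in c..η t a₁ b,
              rellichFlux a₁ (phiX1 ϕ t a₁ b y) b (phiX2 ϕ t a₁ b y) y (phiY3 ϕ t a₁ b y))
        + ((∫ a in a₁..a₂, ∫ y in c..η t a b₂,
              rellichFlux b₂ (phiX2 ϕ t a b₂ y) a (phiX1 ϕ t a b₂ y) y (phiY3 ϕ t a b₂ y))
          - ∫ a in a₁..a₂, ∫ y in c..η t a b₁,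
              rellichFlux b₁ (phiX2 ϕ t a b₁ y) a (phiX1 ϕ t a b₁ y) y (phiY3 ϕ t a b₁ y))
        + ((∫ a in a₁..a₂, ∫ b in b₁..b₂,
              ((a * phiX1 ϕ t a b (η t a b) + b * phiX2 ϕ t a b (η t a b)
                  + η t a b * phiY3 ϕ t a b (η t a b))
                * (phiY3 ϕ t a b (η t a b) - (etaX1 η t a b * phiX1 ϕ t a b (η t a b)
                  + etaX2 η t a b * phiX2 ϕ t a b (η t a b)))
              - 1 / 2 * gradSq3 ϕ t a b (η t a b)
                * (η t a b - (a * etaX1 η t a b + b * etaX2 η t a b))))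
          - ∫ a in a₁..a₂, ∫ b in b₁..b₂,
              rellichFlux c (phiY3 ϕ t a b c) a (phiX1 ϕ t a b c) b (phiX2 ϕ t a b c)) := by
  simp only [← divergence_rellichFlux hϕ]
  rw [integral_divergence_below_surface
    (V₁ := fun a b y => rellichFlux a (phiX1 ϕ t a b y) b (phiX2 ϕ t a b y) y (phiY3 ϕ t a b y))
    (V₂ := fun a b y => rellichFlux b (phiX2 ϕ t a b y) a (phiX1 ϕ t a b y) y (phiY3 ϕ t a b y))
    (V₃ := fun a b y => rellichFlux y (phiY3 ϕ t a b y) a (phiX1 ϕ t a b y) b (phiX2 ϕ t a b y))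
    (by fun_prop [rellichFlux, phiX1, phiX2, phiY3])
    (by fun_prop [rellichFlux, phiX1, phiX2, phiY3])
    (by fun_prop [rellichFlux, phiX1, phiX2, phiY3]) hη]
  congr! 6 with a b
  simp only [rellichFlux, gradSq3, etaX1, etaX2]
  ring

/-- The Dirichlet integrals over the walls `x₁ = L₁`, `x₂ = L₂` and the bottom `y = -h`, weighted by
the distance to the origin: the integrand of `2P` at time `t`. -/
def wallEnergy (L₁ L₂ h : ℝ) (η : ℝ → ℝ → ℝ → ℝ) (ϕ : ℝ → ℝ → ℝ → ℝ → ℝ) (t : ℝ) : ℝ :=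
  L₁ * (∫ x₂ in 0..L₂, ∫ y in (-h)..η t L₁ x₂, gradSq3 ϕ t L₁ x₂ y)
    + L₂ * (∫ x₁ in 0..L₁, ∫ y in (-h)..η t x₁ L₂, gradSq3 ϕ t x₁ L₂ y)
    + h * ∫ x₁ in 0..L₁, ∫ x₂ in 0..L₂, gradSq3 ϕ t x₁ x₂ (-h)

theorem pohozaev_identity (hϕ : ContDiff ℝ 2 ↿(ϕ t)) (hη : ContDiff ℝ 1 ↿(η t))
    (hL₁ : 0 ≤ L₁) (hL₂ : 0 ≤ L₂) (hbelow : ∀ a ∈ Icc 0 L₁, ∀ b ∈ Icc 0 L₂, -h ≤ η t a b)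
    (hlaplace : ∀ a ∈ Icc 0 L₁, ∀ b ∈ Icc 0 L₂, ∀ y ∈ Icc (-h) (η t a b),
      deriv (fun s => phiX1 ϕ t s b y) a + deriv (fun s => phiX2 ϕ t a s y) b
        + deriv (fun s => phiY3 ϕ t a b s) y = 0)
    (hwall_x1 : ∀ a ∈ ({0, L₁} : Set ℝ), ∀ b ∈ Icc 0 L₂, ∀ y ∈ Icc (-h) (η t a b),
      phiX1 ϕ t a b y = 0)
    (hwall_x2 : ∀ b ∈ ({0, L₂} : Set ℝ), ∀ a ∈ Icc 0 L₁, ∀ y ∈ Icc (-h) (η t a b),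
      phiX2 ϕ t a b y = 0)
    (hbed : ∀ a ∈ Icc 0 L₁, ∀ b ∈ Icc 0 L₂, phiY3 ϕ t a b (-h) = 0) :
    ∫ a in 0..L₁, ∫ b in 0..L₂,
        ((a * phiX1 ϕ t a b (η t a b) + b * phiX2 ϕ t a b (η t a b)
            + η t a b * phiY3 ϕ t a b (η t a b))
          * (phiY3 ϕ t a b (η t a b) - (etaX1 η t a b * phiX1 ϕ t a b (η t a b)
            + etaX2 η t a b * phiX2 ϕ t a b (η t a b)))
        - 1 / 2 * gradSq3 ϕ t a b (η t a b)
          * (η t a b - (a * etaX1 η t a b + b * etaX2 η t a b)))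
      = 1 / 2 * wallEnergy L₁ L₂ h η ϕ t
        - 1 / 2 * ∫ a in 0..L₁, ∫ b in 0..L₂, ∫ y in (-h)..η t a b, gradSq3 ϕ t a b y := by
  have hvolume : ∫ a in 0..L₁, ∫ b in 0..L₂, ∫ y in (-h)..η t a b,
        ((a * phiX1 ϕ t a b y + b * phiX2 ϕ t a b y + y * phiY3 ϕ t a b y)
            * (deriv (fun s => phiX1 ϕ t s b y) a + deriv (fun s => phiX2 ϕ t a s y) b
              + deriv (fun s => phiY3 ϕ t a b s) y)
          - 1 / 2 * gradSq3 ϕ t a b y)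
      = -1 / 2 * ∫ a in 0..L₁, ∫ b in 0..L₂, ∫ y in (-h)..η t a b, gradSq3 ϕ t a b y := by
    rw [← intervalIntegral.integral_const_mul]
    refine integral_congr_Icc hL₁ fun a ha => ?_
    refine integral_integral_below_graph_eq_const_mul hL₂ (hbelow a ha) fun b hb y hy => ?_
    rw [hlaplace a ha b hb y hy]
    ring
  have hflux₁ (a : ℝ) (hamem : a ∈ ({0, L₁} : Set ℝ)) (ha : a ∈ Icc 0 L₁) :
      ∫ b in 0..L₂, ∫ y in (-h)..η t a b,
        rellichFlux a (phiX1 ϕ t a b y) b (phiX2 ϕ t a b y) y (phiY3 ϕ t a b y)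
      = -a / 2 * ∫ b in 0..L₂, ∫ y in (-h)..η t a b, gradSq3 ϕ t a b y := by
    refine integral_integral_below_graph_eq_const_mul hL₂ (hbelow a ha) fun b hb y hy => ?_
    rw [gradSq3, hwall_x1 a hamem b hb y hy, rellichFlux_zero]
  have hflux₂ (b : ℝ) (hbmem : b ∈ ({0, L₂} : Set ℝ)) (hb : b ∈ Icc 0 L₂) :
      ∫ a in 0..L₁, ∫ y in (-h)..η t a b,
        rellichFlux b (phiX2 ϕ t a b y) a (phiX1 ϕ t a b y) y (phiY3 ϕ t a b y)
      = -b / 2 * ∫ a in 0..L₁, ∫ y in (-h)..η t a b, gradSq3 ϕ t a b y := by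
    refine integral_integral_below_graph_eq_const_mul hL₁ (hbelow · · b hb) fun a ha y hy => ?_
    rw [gradSq3, hwall_x2 b hbmem a ha y hy, rellichFlux_zero, add_comm (0 ^ 2)]
  have hflux₃ : ∫ a in 0..L₁, ∫ b in 0..L₂,
        rellichFlux (-h) (phiY3 ϕ t a b (-h)) a (phiX1 ϕ t a b (-h)) b (phiX2 ϕ t a b (-h))
      = -(-h) / 2 * ∫ a in 0..L₁, ∫ b in 0..L₂, gradSq3 ϕ t a b (-h) := by
    refine integral_integral_below_graph_eq_const_mul hL₁ (fun _ _ => hL₂) fun a ha b hb => ?_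
    rw [gradSq3, hbed a ha b hb, rellichFlux_zero, add_comm (0 ^ 2), add_right_comm]
  have hrellich := rellich_identity hϕ hη 0 L₁ 0 L₂ (-h)
  rw [hvolume, hflux₁ 0 (by simp) (left_mem_Icc.2 hL₁), hflux₁ L₁ (by simp) (right_mem_Icc.2 hL₁),
    hflux₂ 0 (by simp) (left_mem_Icc.2 hL₂), hflux₂ L₂ (by simp) (right_mem_Icc.2 hL₂),
    hflux₃] at hrellich
  rw [wallEnergy]
  linarith

end Rellich

section Surface

variable {ϕ : ℝ → ℝ → ℝ → ℝ → ℝ} {η : ℝ → ℝ → ℝ → ℝ} {L₁ L₂ h g t T : ℝ}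

theorem psi3X1_eq (hϕ : Differentiable ℝ ↿ϕ) (hη : Differentiable ℝ ↿η) (t a b : ℝ) :
    psi3X1 η ϕ t a b
      = phiX1 ϕ t a b (η t a b) + etaX1 η t a b * phiY3 ϕ t a b (η t a b) :=
  (hasDerivAt_comp_graph (f := fun s y => ϕ t s b y) (u := fun s => η t s b) (by fun_prop)
    (DifferentiableAt.hasDerivAt (by fun_prop))).deriv

theorem psi3X2_eq (hϕ : Differentiable ℝ ↿ϕ) (hη : Differentiable ℝ ↿η) (t a b : ℝ) :
    psi3X2 η ϕ t a b
      = phiX2 ϕ t a b (η t a b) + etaX2 η t a b * phiY3 ϕ t a b (η t a b) :=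
  (hasDerivAt_comp_graph (f := fun s y => ϕ t a s y) (u := fun s => η t a s) (by fun_prop)
    (DifferentiableAt.hasDerivAt (by fun_prop))).deriv

theorem psi3T_eq (hϕ : Differentiable ℝ ↿ϕ) (hη : Differentiable ℝ ↿η) (t a b : ℝ) :
    psi3T η ϕ t a b
      = phiT3 ϕ t a b (η t a b) + etaT3 η t a b * phiY3 ϕ t a b (η t a b) :=
  (hasDerivAt_comp_graph (f := fun s y => ϕ s a b y) (u := fun s => η s a b) (by fun_prop)
    (DifferentiableAt.hasDerivAt (by fun_prop))).deriv

/-- A `C²` solution of the water-wave equations on `[0,T]`, over `Q = [0,L₁] × [0,L₂]` with solid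
walls and bottom `y = -h`, whose surface does not cross the bottom. Neither the mean level nor the
contact angle of the surface is prescribed. -/
structure IsWaterWave (L₁ L₂ h g T : ℝ) (η : ℝ → ℝ → ℝ → ℝ) (ϕ : ℝ → ℝ → ℝ → ℝ → ℝ) : Prop where
  contDiff_eta : ContDiff ℝ 2 ↿η
  contDiff_phi : ContDiff ℝ 2 ↿ϕ
  neg_le_eta : ∀ t ∈ Icc 0 T, ∀ a ∈ Icc 0 L₁, ∀ b ∈ Icc 0 L₂, -h ≤ η t a b
  laplace : ∀ t ∈ Icc 0 T, ∀ a ∈ Icc 0 L₁, ∀ b ∈ Icc 0 L₂, ∀ y ∈ Icc (-h) (η t a b),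
    deriv (fun s => phiX1 ϕ t s b y) a + deriv (fun s => phiX2 ϕ t a s y) b
      + deriv (fun s => phiY3 ϕ t a b s) y = 0
  bc_x1 : ∀ t ∈ Icc 0 T, ∀ a ∈ ({0, L₁} : Set ℝ), ∀ b ∈ Icc 0 L₂, ∀ y ∈ Icc (-h) (η t a b),
    phiX1 ϕ t a b y = 0
  bc_x2 : ∀ t ∈ Icc 0 T, ∀ b ∈ ({0, L₂} : Set ℝ), ∀ a ∈ Icc 0 L₁, ∀ y ∈ Icc (-h) (η t a b),
    phiX2 ϕ t a b y = 0
  bc_bottom : ∀ t ∈ Icc 0 T, ∀ a ∈ Icc 0 L₁, ∀ b ∈ Icc 0 L₂, phiY3 ϕ t a b (-h) = 0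
  kinematic : ∀ t ∈ Icc 0 T, ∀ a ∈ Icc 0 L₁, ∀ b ∈ Icc 0 L₂,
    etaT3 η t a b = phiY3 ϕ t a b (η t a b)
      - (etaX1 η t a b * phiX1 ϕ t a b (η t a b) + etaX2 η t a b * phiX2 ϕ t a b (η t a b))
  bernoulli : ∀ t ∈ Icc 0 T, ∀ a ∈ Icc 0 L₁, ∀ b ∈ Icc 0 L₂,
    phiT3 ϕ t a b (η t a b) + 1 / 2 * gradSq3 ϕ t a b (η t a b) + g * η t a b = 0

theorem IsWW3D.isWaterWave (hsol : IsWW3D L₁ L₂ h g T η ϕ) (hh : 0 ≤ h) :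
    IsWaterWave L₁ L₂ h g T η ϕ where
  contDiff_eta := contDiff_infty.1 hsol.smooth_eta 2
  contDiff_phi := contDiff_infty.1 hsol.smooth_phi 2
  neg_le_eta t ht a ha b hb := by linarith [hsol.eta_lower t ht a ha b hb]
  laplace := hsol.laplace
  bc_x1 := hsol.bc_x1
  bc_x2 := hsol.bc_x2
  bc_bottom := hsol.bc_bottom
  kinematic := hsol.kinematic
  bernoulli := hsol.bernoulli

theorem IsWaterWave.surface_pohozaev (hsol : IsWaterWave L₁ L₂ h g T η ϕ) (hL₁ : 0 ≤ L₁)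
    (hL₂ : 0 ≤ L₂) (ht : t ∈ Icc 0 T) :
    ∫ a in 0..L₁, ∫ b in 0..L₂,
        (etaT3 η t a b * (a * psi3X1 η ϕ t a b + b * psi3X2 η ϕ t a b)
          + (psi3T η ϕ t a b + g * η t a b)
            * (η t a b - (a * etaX1 η t a b + b * etaX2 η t a b)))
      = 1 / 2 * wallEnergy L₁ L₂ h η ϕ t
        - 1 / 2 * ∫ a in 0..L₁, ∫ b in 0..L₂, ∫ y in (-h)..η t a b, gradSq3 ϕ t a b y := by
  have hϕ := hsol.contDiff_phi
  have hη := hsol.contDiff_eta.of_le one_le_two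
  have hdϕ : Differentiable ℝ ↿ϕ := hϕ.differentiable (by norm_num)
  have hdη : Differentiable ℝ ↿η := hη.differentiable (by norm_num)
  rw [← pohozaev_identity (by fun_prop) (by fun_prop) hL₁ hL₂ (hsol.neg_le_eta t ht)
    (hsol.laplace t ht) (hsol.bc_x1 t ht) (hsol.bc_x2 t ht) (hsol.bc_bottom t ht)]
  refine integral_congr_Icc hL₁ fun a ha => integral_congr_Icc hL₂ fun b hb => ?_
  have hhalf : 1 / 2 * gradSq3 ϕ t a b (η t a b)
      = -(phiT3 ϕ t a b (η t a b) + g * η t a b) := by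
    linarith [hsol.bernoulli t ht a ha b hb]
  rw [← hsol.kinematic t ht a ha b hb, hhalf, psi3X1_eq hdϕ hdη, psi3X2_eq hdϕ hdη,
    psi3T_eq hdϕ hdη]
  ring

/-- The density `η (x·∇ψ)` of the virial moment. -/
def virialDensity (η : ℝ → ℝ → ℝ → ℝ) (ϕ : ℝ → ℝ → ℝ → ℝ → ℝ) (t x₁ x₂ : ℝ) : ℝ :=
  η t x₁ x₂ * (x₁ * psi3X1 η ϕ t x₁ x₂ + x₂ * psi3X2 η ϕ t x₁ x₂)

theorem hasDerivAt_virialDensity (hϕ : ContDiff ℝ 2 ↿ϕ) (hη : ContDiff ℝ 2 ↿η) (t a b : ℝ) :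
    HasDerivAt (fun s => virialDensity η ϕ s a b)
      (etaT3 η t a b * (a * psi3X1 η ϕ t a b + b * psi3X2 η ϕ t a b)
        + η t a b * (a * deriv (fun s => psi3T η ϕ t s b) a
          + b * deriv (fun s => psi3T η ϕ t a s) b)) t := by
  have hψ : ContDiff ℝ 2 ↿(psi3 η ϕ) := by fun_prop [psi3]
  have hsymm₁ : deriv (fun s => psi3X1 η ϕ s a b) t = deriv (fun s => psi3T η ϕ t s b) a :=
    deriv_deriv_comm (f := fun s a => psi3 η ϕ s a b) (by fun_prop) t a
  have hsymm₂ : deriv (fun s => psi3X2 η ϕ s a b) t = deriv (fun s => psi3T η ϕ t a s) b :=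
    deriv_deriv_comm (f := fun s b => psi3 η ϕ s a b) (by fun_prop) t b
  have hd₁ : ContDiff ℝ 1 fun s => psi3X1 η ϕ s a b := by fun_prop [psi3X1]
  have hd₂ : ContDiff ℝ 1 fun s => psi3X2 η ϕ s a b := by fun_prop [psi3X2]
  have hdη : Differentiable ℝ fun s => η s a b := by fun_prop (disch := norm_num)
  rw [← hsymm₁, ← hsymm₂]
  exact (hdη t).hasDerivAt.mul
    (((hd₁.differentiable one_ne_zero t).hasDerivAt.const_mul a).add
      ((hd₂.differentiable one_ne_zero t).hasDerivAt.const_mul b))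

theorem hasDerivAt_neg_mul_sub_sq {w p : ℝ → ℝ} {w' p' x : ℝ} (hw : HasDerivAt w w' x)
    (hp : HasDerivAt p p' x) (g : ℝ) :
    HasDerivAt (fun s => -(w s) * p s - g / 2 * w s ^ 2)
      (-w' * (p x + g * w x) - w x * p') x := by
  refine ((hw.neg.mul hp).sub ((hw.pow 2).const_mul (g / 2))).congr_deriv ?_
  simp only [Pi.neg_apply]
  ring

theorem two_mul_add_radial_Theta3 (hϕ : ContDiff ℝ 2 ↿ϕ) (hη : ContDiff ℝ 2 ↿η) (t a b : ℝ) :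
    2 * Theta3 g η ϕ t a b + a * deriv (fun s => Theta3 g η ϕ t s b) a
        + b * deriv (fun s => Theta3 g η ϕ t a s) b
      = etaT3 η t a b * (a * psi3X1 η ϕ t a b + b * psi3X2 η ϕ t a b)
          + (psi3T η ϕ t a b + g * η t a b)
            * (η t a b - (a * etaX1 η t a b + b * etaX2 η t a b))
        - 3 * (η t a b * psi3T η ϕ t a b) - 2 * g * η t a b ^ 2
        - deriv (fun s => virialDensity η ϕ s a b) t := by
  have hψ : ContDiff ℝ 2 ↿(psi3 η ϕ) := by fun_prop [psi3]
  have hp : ContDiff ℝ 1 ↿(psi3T η ϕ) := by fun_prop [psi3T]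
  have hdp : Differentiable ℝ ↿(psi3T η ϕ) := hp.differentiable one_ne_zero
  have hdη : Differentiable ℝ ↿η := hη.differentiable two_ne_zero
  have hΘ₁ : deriv (fun s => Theta3 g η ϕ t s b) a = _ :=
    (hasDerivAt_neg_mul_sub_sq (w := fun s => η t s b) (p := fun s => psi3T η ϕ t s b)
      (DifferentiableAt.hasDerivAt (by fun_prop))
      (DifferentiableAt.hasDerivAt (by fun_prop)) g).deriv
  have hΘ₂ : deriv (fun s => Theta3 g η ϕ t a s) b = _ :=
    (hasDerivAt_neg_mul_sub_sq (w := fun s => η t a s) (p := fun s => psi3T η ϕ t a s)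
      (DifferentiableAt.hasDerivAt (by fun_prop))
      (DifferentiableAt.hasDerivAt (by fun_prop)) g).deriv
  rw [hΘ₁, hΘ₂, (hasDerivAt_virialDensity hϕ hη t a b).deriv, Theta3, etaX1, etaX2]
  ring

theorem IsWaterWave.integral_wall_Theta3 (hsol : IsWaterWave L₁ L₂ h g T η ϕ) (hL₁ : 0 ≤ L₁)
    (hL₂ : 0 ≤ L₂) (ht : t ∈ Icc 0 T) :
    L₁ * (∫ b in 0..L₂, Theta3 g η ϕ t L₁ b) + L₂ * (∫ a in 0..L₁, Theta3 g η ϕ t a L₂)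
      = 1 / 2 * wallEnergy L₁ L₂ h η ϕ t
        - 1 / 2 * (∫ a in 0..L₁, ∫ b in 0..L₂, ∫ y in (-h)..η t a b, gradSq3 ϕ t a b y)
        - 3 * (∫ a in 0..L₁, ∫ b in 0..L₂, η t a b * psi3T η ϕ t a b)
        - 2 * g * (∫ a in 0..L₁, ∫ b in 0..L₂, η t a b ^ 2)
        - ∫ a in 0..L₁, ∫ b in 0..L₂, deriv (fun s => virialDensity η ϕ s a b) t := by
  have hϕ := hsol.contDiff_phi
  have hη := hsol.contDiff_eta
  have hη₁ := hη.of_le one_le_two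
  have hψ : ContDiff ℝ 2 ↿(psi3 η ϕ) := by fun_prop [psi3]
  have hΘ : ContDiff ℝ 1 ↿(Theta3 g η ϕ t) := by fun_prop [Theta3, psi3T]
  have hvirial : ContDiff ℝ 1 ↿(virialDensity η ϕ) := by
    fun_prop [virialDensity, psi3X1, psi3X2]
  rw [integral_wall_eq_integral_divergence hΘ]
  simp only [two_mul_add_radial_Theta3 hϕ hη]
  repeat rw [integral_integral_sub_of_continuous
    (by fun_prop [psi3T, psi3X1, psi3X2, etaX1, etaX2, etaT3]) (by fun_prop [psi3T])]
  rw [hsol.surface_pohozaev hL₁ hL₂ ht]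
  simp only [intervalIntegral.integral_const_mul]

theorem lemma_after_ibp_3d_general (hL₁ : 0 ≤ L₁) (hL₂ : 0 ≤ L₂) (hT : 0 ≤ T)
    (hsol : IsWaterWave L₁ L₂ h g T η ϕ) :
    bigB L₁ L₂ g T η ϕ
      = bigP L₁ L₂ h T η ϕ
        - 1 / 2 * (∫ t in 0..T, ∫ a in 0..L₁, ∫ b in 0..L₂, ∫ y in (-h)..η t a b,
            gradSq3 ϕ t a b y)
        - 3 * (∫ t in 0..T, ∫ a in 0..L₁, ∫ b in 0..L₂, η t a b * psi3T η ϕ t a b)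
        - 2 * g * (∫ t in 0..T, ∫ a in 0..L₁, ∫ b in 0..L₂, η t a b ^ 2)
        - ((∫ a in 0..L₁, ∫ b in 0..L₂, virialDensity η ϕ T a b)
            - ∫ a in 0..L₁, ∫ b in 0..L₂, virialDensity η ϕ 0 a b) := by
  have hϕ := hsol.contDiff_phi
  have hη := hsol.contDiff_eta
  have hη₁ := hη.of_le one_le_two
  have hψ : ContDiff ℝ 2 ↿(psi3 η ϕ) := by fun_prop [psi3]
  have hgrad : Continuous ↿(gradSq3 ϕ) := by fun_prop [gradSq3, phiX1, phiX2, phiY3]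
  have hwall : Continuous (wallEnergy L₁ L₂ h η ϕ) := by fun_prop [wallEnergy]
  have hvirial : ContDiff ℝ 1 ↿(virialDensity η ϕ) := by
    fun_prop [virialDensity, psi3X1, psi3X2]
  rw [bigB, integral_congr_Icc hT fun t ht => hsol.integral_wall_Theta3 hL₁ hL₂ ht,
    ← integral_deriv_integral_integral hvirial]
  repeat rw [integral_sub_of_continuous (by fun_prop [psi3T]) (by fun_prop [psi3T])]
  simp only [intervalIntegral.integral_const_mul]
  rw [bigP]
  rfl

end Surface

/-- Lemma 4.5 (`d = 2`). -/
theorem lemma_after_ibp_3d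
    (L₁ L₂ h g T : ℝ) (hL₁ : 0 < L₁) (hL₂ : 0 < L₂) (hh : 0 < h) (hg : 0 < g) (hT : 0 < T)
    (η : ℝ → ℝ → ℝ → ℝ) (ϕ : ℝ → ℝ → ℝ → ℝ → ℝ)
    (hsol : IsWW3D L₁ L₂ h g T η ϕ) :
    bigB L₁ L₂ g T η ϕ
      = bigP L₁ L₂ h T η ϕ
        - 1 / 2 * (∫ t in (0:ℝ)..T, ∫ x₁ in (0:ℝ)..L₁, ∫ x₂ in (0:ℝ)..L₂,
            ∫ y in (-h)..(η t x₁ x₂), gradSq3 ϕ t x₁ x₂ y)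
        - 3 * (∫ t in (0:ℝ)..T, ∫ x₁ in (0:ℝ)..L₁, ∫ x₂ in (0:ℝ)..L₂,
            η t x₁ x₂ * psi3T η ϕ t x₁ x₂)
        - 2 * g * (∫ t in (0:ℝ)..T, ∫ x₁ in (0:ℝ)..L₁, ∫ x₂ in (0:ℝ)..L₂,
            (η t x₁ x₂) ^ 2)
        - ((∫ x₁ in (0:ℝ)..L₁, ∫ x₂ in (0:ℝ)..L₂,
              η T x₁ x₂ * (x₁ * psi3X1 η ϕ T x₁ x₂ + x₂ * psi3X2 η ϕ T x₁ x₂))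
            - ∫ x₁ in (0:ℝ)..L₁, ∫ x₂ in (0:ℝ)..L₂,
                η 0 x₁ x₂ * (x₁ * psi3X1 η ϕ 0 x₁ x₂ + x₂ * psi3X2 η ϕ 0 x₁ x₂)) := by
  exact lemma_after_ibp_3d_general hL₁.le hL₂.le hT.le (hsol.isWaterWave hh.le)
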